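/- Bailey's separation-of-variables identity: F4(a; b; c, a+b-c+1; x(1-y), y(1-x)) = 2F1(a, b; c; x) * 2F1(a, b; a+b-c+1; y) for x, y in a neighborhood of 0. -/

import Mathlib

/-!
Write `A n m` for the coefficients of `F4` and `e n m p` for the coefficient of `t ^ p` in
`t ^ n * (1 - t) ^ m`. Near the origin the left-hand side may be expanded in powers of `x` and `y`,
and the coefficient of `x ^ p * y ^ q` is `L p q = ∑ A n m * e n m p * e m n q`, a finite sum.

The key point is that the left-hand side satisfies the hypergeometric equation in `x`: with
`X = x (1 - y)` and `Y = y (1 - x)`, the hypergeometric operator in `x` equals `(1 - y) P₁ + y P₂`,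
where `P₁`, `P₂` are the two operators of Appell's system, which annihilate `F4`. On coefficients
this reads `(p + 1) (p + c) L (p + 1) q = (p + a) (p + b) L p q` (`L_succ`). It follows from the
action of the operator on `x ^ n * (1 - x) ^ m` (`e_hypergeometric`), from the two recurrences
`A_succ_left` and `A_succ_right`, and from `(1 - y) + y = 1` (`e_split`). Since
`L 0 q = A 0 q`, induction on `p` gives `L p q = A p 0 * A 0 q`, the coefficient of the product.

The rearrangement of the fourfold sum is justified by a bound `‖A n m‖ ≤ M ^ (n + m)`
(`exists_norm_A_le`) and by `∑ₚ ‖e n m p‖ r ^ p = r ^ n * (1 + r) ^ m`.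
-/

noncomputable def poch (a : ℂ) (n : ℕ) : ℂ := (ascPochhammer ℂ n).eval a

noncomputable def hpg21 (A B C z : ℂ) : ℂ :=
  ∑' n : ℕ, poch A n * poch B n / (poch C n * (n.factorial : ℂ)) * z ^ n

noncomputable def F4 (a b c1 c2 x y : ℂ) : ℂ :=
  ∑' p : ℕ × ℕ, poch a (p.1 + p.2) * poch b (p.1 + p.2) /
    (poch c1 p.1 * poch c2 p.2 * (p.1.factorial : ℂ) * (p.2.factorial : ℂ)) * x ^ p.1 * y ^ p.2

namespace BaileyF4

/-! ### The coefficients of Appell's function -/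

lemma poch_zero (a : ℂ) : poch a 0 = 1 := by simp [poch]

lemma poch_succ (a : ℂ) (n : ℕ) : poch a (n + 1) = poch a n * (a + n) := by
  simp [poch, ascPochhammer_succ_eval]

lemma poch_ne_zero {c : ℂ} (hc : ∀ n : ℕ, c ≠ -(n : ℂ)) (n : ℕ) : poch c n ≠ 0 := by
  induction n with
  | zero => simp [poch_zero]
  | succ n ih =>
    rw [poch_succ]
    exact mul_ne_zero ih fun h => hc n (eq_neg_of_add_eq_zero_left h)

/-- The coefficient of `X ^ n * Y ^ m` in Appell's function `F4 (a; b; c, d; X, Y)`. -/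
noncomputable def A (a b c d : ℂ) (n m : ℕ) : ℂ :=
  poch a (n + m) * poch b (n + m) / (poch c n * poch d m * (n.factorial : ℂ) * (m.factorial : ℂ))

lemma A_succ_left {c d : ℂ} (a b : ℂ) (hc : ∀ n : ℕ, c ≠ -(n : ℂ)) (hd : ∀ n : ℕ, d ≠ -(n : ℂ))
    (n m : ℕ) :
    A a b c d (n + 1) m * ((n + 1) * (n + c)) = (n + m + a) * (n + m + b) * A a b c d n m := by
  have h1 := poch_ne_zero hc n
  have h2 := poch_ne_zero hd m
  have h3 : c + n ≠ 0 := fun h => hc n (eq_neg_of_add_eq_zero_left h)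
  have h4 : (n.factorial : ℂ) ≠ 0 := by exact_mod_cast n.factorial_ne_zero
  have h5 : (m.factorial : ℂ) ≠ 0 := by exact_mod_cast m.factorial_ne_zero
  have h6 : (n : ℂ) + 1 ≠ 0 := by exact_mod_cast n.succ_ne_zero
  simp only [A, Nat.add_right_comm n 1 m, poch_succ, Nat.factorial_succ]
  push_cast
  field_simp
  ring

lemma A_swap (a b c d : ℂ) (n m : ℕ) : A a b c d n m = A a b d c m n := by
  simp only [A, Nat.add_comm n m]
  ring

lemma A_succ_right {c d : ℂ} (a b : ℂ) (hc : ∀ n : ℕ, c ≠ -(n : ℂ)) (hd : ∀ n : ℕ, d ≠ -(n : ℂ))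
    (n m : ℕ) :
    A a b c d n (m + 1) * ((m + 1) * (m + d)) = (n + m + a) * (n + m + b) * A a b c d n m := by
  rw [A_swap, A_succ_left a b hd hc, A_swap a b d c]
  ring

/-! ### The coefficients of `t ^ n * (1 - t) ^ m` -/

/-- The coefficient of `t ^ p` in the polynomial `t ^ n * (1 - t) ^ m`. -/
noncomputable def e (n m p : ℕ) : ℂ :=
  if n ≤ p then (-1) ^ (p - n) * (m.choose (p - n) : ℂ) else 0

lemma e_of_lt {n p : ℕ} (m : ℕ) (h : p < n) : e n m p = 0 := by
  simp [e, not_le.mpr h]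

lemma e_add (n m j : ℕ) : e n m (n + j) = (-1) ^ j * (m.choose j : ℂ) := by
  simp [e]

/-- The coefficient form of `t ^ n * (1 - t) ^ m = ((1 - t) + t) * t ^ n * (1 - t) ^ m`. -/
lemma e_split (n m p : ℕ) : e n (m + 1) p + e (n + 1) m p = e n m p := by
  rcases lt_or_ge p n with h | h
  · simp [e_of_lt _ h, e_of_lt _ (h.trans n.lt_succ_self)]
  · obtain ⟨j, rfl⟩ := Nat.exists_eq_add_of_le h
    cases j with
    | zero => simp [e]
    | succ j =>
      have h1 := e_add (n + 1) m j
      rw [show n + 1 + j = n + (j + 1) by ring] at h1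
      rw [h1, e_add, e_add, Nat.choose_succ_succ]
      push_cast
      ring

/-- The hypergeometric operator `t (1 - t) ∂² + (c - (a + b + 1) t) ∂ - a b` applied to
`t ^ n * (1 - t) ^ m`, read off at `t ^ p`. -/
lemma e_hypergeometric (a b c : ℂ) (n m p : ℕ) :
    (p + 1) * (p + c) * e n m (p + 1) - (p + a) * (p + b) * e n m p =
      n * (n - 1 + c) * e (n - 1) m p + m * (m - 1 + (a + b - c + 1)) * e n (m - 1) p
        - (n + m + a) * (n + m + b) * e n m p := by
  rcases lt_trichotomy (p + 1) n with h | h | h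
  · rw [e_of_lt _ h, e_of_lt _ (by omega), e_of_lt _ (by omega : p < n - 1),
      e_of_lt _ (by omega : p < n)]
    ring
  · subst h
    rw [e_of_lt _ p.lt_succ_self, e_of_lt _ p.lt_succ_self]
    simp [e]
  · obtain ⟨j, rfl⟩ := Nat.exists_eq_add_of_le (Nat.lt_succ_iff.mp h)
    have h1 : (n : ℂ) * e (n - 1) m (n + j) = n * ((-1) ^ (j + 1) * (m.choose (j + 1) : ℂ)) := by
      cases n with
      | zero => simp
      | succ n => rw [← e_add n m (j + 1), Nat.add_sub_cancel, show n + 1 + j = n + (j + 1) by ring]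
    have h2 : (m.choose (j + 1) : ℂ) * (j + 1) = m.choose j * (m - j) := by
      rcases le_or_gt j m with hj | hj
      · have := Nat.choose_succ_right_eq m j
        rw [← Nat.cast_sub hj]
        exact_mod_cast this
      · simp [Nat.choose_eq_zero_of_lt hj, Nat.choose_eq_zero_of_lt (hj.trans j.lt_succ_self)]
    have h3 : (m : ℂ) * ((m - 1).choose j : ℂ) = m.choose j * (m - j) := by
      rw [← h2]
      cases m with
      | zero => simp
      | succ m => exact_mod_cast Nat.add_one_mul_choose_eq m j
    rw [e_add n (m - 1) j, e_add n m j, show n + j + 1 = n + (j + 1) by ring, e_add n m (j + 1)]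
    push_cast
    linear_combination (-(n - 1 + c)) * h1 - (-1) ^ j * (2 * n + j + c) * h2
      - (-1) ^ j * (m - 1 + (a + b - c + 1)) * h3

lemma hasSum_e (n m : ℕ) (x : ℂ) : HasSum (fun p => e n m p * x ^ p) (x ^ n * (1 - x) ^ m) := by
  rw [← (add_right_injective n).hasSum_iff (f := fun p => e n m p * x ^ p)]
  · have : HasSum (fun j => e n m (n + j) * x ^ (n + j))
        (∑ j ∈ Finset.range (m + 1), e n m (n + j) * x ^ (n + j)) := by
      apply hasSum_sum_of_ne_finset_zero
      intro j hj
      rw [e_add, Nat.choose_eq_zero_of_lt (by simpa using hj)]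
      simp
    have hv : x ^ n * (1 - x) ^ m = ∑ j ∈ Finset.range (m + 1), e n m (n + j) * x ^ (n + j) := by
      rw [show (1 - x) = -x + 1 by ring, add_pow, Finset.mul_sum]
      refine Finset.sum_congr rfl fun j _ => ?_
      rw [e_add, neg_pow]
      ring
    rw [hv]
    exact this
  · intro p hp
    have : p < n := by
      by_contra! h
      exact hp ⟨p - n, by simp; omega⟩
    simp [e_of_lt _ this]

lemma hasSum_norm_e (n m : ℕ) (r : ℝ) :
    HasSum (fun p => ‖e n m p‖ * r ^ p) (r ^ n * (1 + r) ^ m) := by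
  rw [← Complex.hasSum_ofReal]
  -- Evaluating at `-r` makes all terms carry the common sign `(-1) ^ n`.
  have h := (hasSum_e n m (-(r : ℂ))).mul_left ((-1) ^ n)
  have sq : ∀ k : ℕ, ((-1 : ℂ) ^ k) * (-1) ^ k = 1 := fun k => by
    rw [← mul_pow]; simp
  have hv : ((r ^ n * (1 + r) ^ m : ℝ) : ℂ) = (-1) ^ n * ((-(r : ℂ)) ^ n * (1 - -(r : ℂ)) ^ m) := by
    rw [neg_pow]
    push_cast
    linear_combination (-(r : ℂ) ^ n * (1 + (r : ℂ)) ^ m) * sq n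
  rw [hv]
  have hterm : (fun p => ((‖e n m p‖ * r ^ p : ℝ) : ℂ)) =
      fun p => (-1) ^ n * (e n m p * (-(r : ℂ)) ^ p) := by
    funext p
    rcases lt_or_ge p n with hp | hp
    · simp [e_of_lt _ hp]
    · obtain ⟨j, rfl⟩ := Nat.exists_eq_add_of_le hp
      rw [e_add, neg_pow (r : ℂ), pow_add (-1 : ℂ)]
      simp only [norm_mul, norm_pow, norm_neg, norm_one, one_pow, one_mul, Complex.norm_natCast]
      push_cast
      linear_combination (-(m.choose j : ℂ) * r ^ (n + j) * (-1) ^ j * (-1) ^ j) * sq n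
        - (m.choose j : ℂ) * r ^ (n + j) * sq j
  rw [hterm]
  exact h

/-! ### The hypergeometric recurrence for the coefficients of the left-hand side -/

/-- The coefficient of `x ^ p * y ^ q` in `F4 (a; b; c, d; x (1 - y), y (1 - x))`. The sum has
finite support, since `e n m p = 0` for `n > p`. -/
noncomputable def L (a b c d : ℂ) (p q : ℕ) : ℂ :=
  ∑' z : ℕ × ℕ, A a b c d z.1 z.2 * e z.1 z.2 p * e z.2 z.1 q

lemma summable_of_zero {F : ℕ × ℕ → ℂ} (N : ℕ) (h : ∀ n m, N < n ∨ N < m → F (n, m) = 0) :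
    Summable F := by
  apply summable_of_ne_finset_zero (s := Finset.range (N + 1) ×ˢ Finset.range (N + 1))
  rintro ⟨n, m⟩ hz
  apply h
  simp only [Finset.mem_product, Finset.mem_range] at hz
  omega

/-- Summability of the finitely supported families defining `L`, for any coefficients `G`. -/
lemma summable_of_zero' (G : ℕ → ℕ → ℂ) (p q : ℕ) :
    Summable fun z : ℕ × ℕ => G z.1 z.2 * e z.1 z.2 p * e z.2 z.1 q := by
  apply summable_of_zero (p + q)
  rintro n m (h | h)
  · simp [e_of_lt m (by omega : p < n)]
  · simp [e_of_lt n (by omega : q < m)]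

lemma L_succ {a b c : ℂ} (hc : ∀ n : ℕ, c ≠ -(n : ℂ))
    (hd : ∀ n : ℕ, a + b - c + 1 ≠ -(n : ℂ)) (p q : ℕ) :
    (p + 1) * (p + c) * L a b c (a + b - c + 1) (p + 1) q =
      (p + a) * (p + b) * L a b c (a + b - c + 1) p q := by
  set d := a + b - c + 1 with hdef
  let S : ℕ → ℕ → ℂ := fun n m => (n + m + a) * (n + m + b) * A a b c d n m
  let U : ℕ × ℕ → ℂ := fun z =>
    A a b c d z.1 z.2 * (z.1 * (z.1 - 1 + c)) * e (z.1 - 1) z.2 p * e z.2 z.1 q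
  let V : ℕ × ℕ → ℂ := fun z =>
    A a b c d z.1 z.2 * (z.2 * (z.2 - 1 + d)) * e z.1 (z.2 - 1) p * e z.2 z.1 q
  have hU : ∑' z, U z = ∑' z : ℕ × ℕ, S z.1 z.2 * e z.1 z.2 p * e z.2 (z.1 + 1) q := by
    have inj : Function.Injective (fun z : ℕ × ℕ => (z.1 + 1, z.2)) := by
      rintro ⟨n, m⟩ ⟨n', m'⟩ h
      simpa using h
    rw [← inj.tsum_eq (f := U)]
    · refine tsum_congr fun z => ?_
      have := A_succ_left a b hc hd z.1 z.2
      simp only [U, S, ← this]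
      push_cast
      simp only [add_sub_cancel_right]
    · rintro ⟨n, m⟩ hz
      cases n with
      | zero => simp [U] at hz
      | succ n => exact ⟨(n, m), rfl⟩
  have hV : ∑' z, V z = ∑' z : ℕ × ℕ, S z.1 z.2 * e z.1 z.2 p * e (z.2 + 1) z.1 q := by
    have inj : Function.Injective (fun z : ℕ × ℕ => (z.1, z.2 + 1)) := by
      rintro ⟨n, m⟩ ⟨n', m'⟩ h
      simpa using h
    rw [← inj.tsum_eq (f := V)]
    · refine tsum_congr fun z => ?_
      have := A_succ_right a b hc hd z.1 z.2
      simp only [V, S, ← this]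
      push_cast
      simp only [add_sub_cancel_right]
    · rintro ⟨n, m⟩ hz
      cases m with
      | zero => simp [V] at hz
      | succ m => exact ⟨(n, m), rfl⟩
  have sU : Summable U := by
    apply summable_of_zero (p + q + 1)
    rintro n m (h | h)
    · simp [U, e_of_lt m (by omega : p < n - 1)]
    · simp [U, e_of_lt n (by omega : q < m)]
  have sV : Summable V := by
    apply summable_of_zero (p + q)
    rintro n m (h | h)
    · simp [V, e_of_lt (m - 1) (by omega : p < n)]
    · simp [V, e_of_lt n (by omega : q < m)]
  have sS := summable_of_zero' S p q
  have sS1 : Summable fun z : ℕ × ℕ => S z.1 z.2 * e z.1 z.2 p * e z.2 (z.1 + 1) q := by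
    apply summable_of_zero (p + q)
    rintro n m (h | h)
    · simp [e_of_lt m (by omega : p < n)]
    · simp [e_of_lt (n + 1) (by omega : q < m)]
  have sS2 : Summable fun z : ℕ × ℕ => S z.1 z.2 * e z.1 z.2 p * e (z.2 + 1) z.1 q := by
    apply summable_of_zero (p + q)
    rintro n m (h | h)
    · simp [e_of_lt m (by omega : p < n)]
    · simp [e_of_lt n (by omega : q < m + 1)]
  have key : ∑' z, U z + ∑' z, V z
      - ∑' z : ℕ × ℕ, S z.1 z.2 * e z.1 z.2 p * e z.2 z.1 q = 0 := by
    rw [hU, hV, ← sS1.tsum_add sS2, ← (sS1.add sS2).tsum_sub sS]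
    convert tsum_zero with z
    rw [← e_split z.2 z.1 q]
    ring
  rw [← sU.tsum_add sV, ← (sU.add sV).tsum_sub sS] at key
  rw [← sub_eq_zero, L, L, ← tsum_mul_left, ← tsum_mul_left,
    ← ((summable_of_zero' _ _ _).mul_left _).tsum_sub ((summable_of_zero' _ _ _).mul_left _), ← key]
  refine tsum_congr fun z => ?_
  have := e_hypergeometric a b c z.1 z.2 p
  simp only [U, V, S]
  rw [← hdef] at this
  linear_combination A a b c d z.1 z.2 * e z.2 z.1 q * this

lemma L_zero (a b c d : ℂ) (q : ℕ) : L a b c d 0 q = A a b c d 0 q := by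
  rw [L, tsum_eq_single (0, q)]
  · simp [e]
  · rintro ⟨n, m⟩ h
    rcases Nat.eq_zero_or_pos n with rfl | hn
    · rcases lt_trichotomy q m with hm | rfl | hm
      · simp [e_of_lt 0 hm]
      · exact absurd rfl h
      · obtain ⟨j, rfl⟩ := Nat.exists_eq_add_of_lt hm
        rw [show m + j + 1 = m + (j + 1) by ring] at *
        simp [e_add]
    · simp [e_of_lt m hn]

lemma L_eq {a b c : ℂ} (hc : ∀ n : ℕ, c ≠ -(n : ℂ))
    (hd : ∀ n : ℕ, a + b - c + 1 ≠ -(n : ℂ)) (p q : ℕ) :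
    L a b c (a + b - c + 1) p q =
      A a b c (a + b - c + 1) p 0 * A a b c (a + b - c + 1) 0 q := by
  induction p with
  | zero => simp [L_zero, A, poch_zero]
  | succ p ih =>
    have h1 : (p : ℂ) + 1 ≠ 0 := by exact_mod_cast p.succ_ne_zero
    have h2 : (p : ℂ) + c ≠ 0 := fun h => hc p (eq_neg_of_add_eq_zero_right h)
    apply mul_left_cancel₀ (mul_ne_zero h1 h2)
    have h3 := A_succ_left a b hc hd p 0
    rw [L_succ hc hd, ih]
    simp only [Nat.cast_zero, add_zero] at h3
    linear_combination (-A a b c (a + b - c + 1) 0 q) * h3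

/-! ### Geometric bounds on the coefficients -/

lemma norm_poch_le (a : ℂ) (n : ℕ) : ‖poch a n‖ ≤ (‖a‖ + 1) ^ n * n.factorial := by
  induction n with
  | zero => simp [poch_zero]
  | succ n ih =>
    have h : ‖a + n‖ ≤ (‖a‖ + 1) * (n + 1) := by
      have h1 := norm_add_le a n
      rw [Complex.norm_natCast] at h1
      nlinarith [norm_nonneg a, mul_nonneg (norm_nonneg a) n.cast_nonneg]
    rw [poch_succ, norm_mul, Nat.factorial_succ]
    push_cast
    calc _ ≤ _ := mul_le_mul ih h (norm_nonneg _) (by positivity)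
      _ = _ := by ring

/-- The Pochhammer symbol is bounded below by a geometric multiple of `n!`, because
`‖c + n‖ / (n + 1)` is positive and tends to `1`. -/
lemma exists_le_norm_poch {c : ℂ} (hc : ∀ n : ℕ, c ≠ -(n : ℂ)) :
    ∃ K : ℝ, 0 < K ∧ ∀ n : ℕ, (n.factorial : ℝ) ≤ K ^ n * ‖poch c n‖ := by
  have hpos : ∀ n : ℕ, 0 < ‖c + n‖ := fun n =>
    norm_pos_iff.mpr fun h => hc n (eq_neg_of_add_eq_zero_left h)
  obtain ⟨N, hN⟩ := exists_nat_ge (2 * ‖c‖ + 1)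
  -- For `n ≥ N` the ratio `(n + 1) / ‖c + n‖` is at most `4`; the sum covers `n < N`.
  set K : ℝ := 4 + ∑ n ∈ Finset.range N, (n + 1) / ‖c + n‖ with hK
  have hsum : ∀ n : ℕ, 0 ≤ ((n : ℝ) + 1) / ‖c + n‖ := fun n => by positivity
  have hK4 : 4 ≤ K := by
    have := Finset.sum_nonneg fun n (_ : n ∈ Finset.range N) => hsum n
    linarith
  have step : ∀ n : ℕ, (n : ℝ) + 1 ≤ K * ‖c + n‖ := fun n => by
    rcases lt_or_ge n N with h | h
    · rw [← div_le_iff₀ (hpos n)]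
      have := Finset.single_le_sum (fun n _ => hsum n) (Finset.mem_range.mpr h)
      linarith
    · have h1 : (n : ℝ) - ‖c‖ ≤ ‖c + n‖ := by
        have := norm_sub_norm_le (n : ℂ) (-c)
        rw [Complex.norm_natCast, norm_neg, sub_neg_eq_add, add_comm (n : ℂ)] at this
        exact this
      have h2 : (N : ℝ) ≤ n := by exact_mod_cast h
      nlinarith [mul_le_mul_of_nonneg_right hK4 (norm_nonneg (c + n)), norm_nonneg c]
  refine ⟨K, by linarith, fun n => ?_⟩
  induction n with
  | zero => simp [poch_zero]
  | succ n ih =>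
    rw [poch_succ, norm_mul, Nat.factorial_succ]
    push_cast
    calc _ ≤ (K * ‖c + n‖) * (K ^ n * ‖poch c n‖) :=
          mul_le_mul (step n) ih (by positivity) (by positivity)
      _ = _ := by ring

/-- The factorials left over after bounding the Pochhammer symbols form the square of a binomial
coefficient, at most `4 ^ (n + m)`. -/
lemma exists_norm_A_le {c d : ℂ} (a b : ℂ) (hc : ∀ n : ℕ, c ≠ -(n : ℂ))
    (hd : ∀ n : ℕ, d ≠ -(n : ℂ)) :
    ∃ M : ℝ, 0 < M ∧ ∀ n m : ℕ, ‖A a b c d n m‖ ≤ M ^ n * M ^ m := by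
  obtain ⟨K, hK, hcK⟩ := exists_le_norm_poch hc
  obtain ⟨K', hK', hdK⟩ := exists_le_norm_poch hd
  set P := (‖a‖ + 1) * (‖b‖ + 1) * 4 with hP
  have hP0 : 0 < P := by positivity
  refine ⟨P * (K + K'), by positivity, fun n m => ?_⟩
  have hch : ((n + m).factorial : ℝ) ≤ 2 ^ (n + m) * (n.factorial * m.factorial) := by
    have h1 := Nat.add_choose_mul_factorial_mul_factorial n m
    have h2 := Nat.choose_le_two_pow (n + m) m
    have : (n + m).factorial ≤ 2 ^ (n + m) * (n.factorial * m.factorial) := by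
      rw [← h1, mul_assoc]
      exact Nat.mul_le_mul_right _ h2
    exact_mod_cast this
  have hfn : (0 : ℝ) < n.factorial := by exact_mod_cast n.factorial_pos
  have hfm : (0 : ℝ) < m.factorial := by exact_mod_cast m.factorial_pos
  have hp1 : 0 < ‖poch c n‖ := norm_pos_iff.mpr (poch_ne_zero hc n)
  have hp2 : 0 < ‖poch d m‖ := norm_pos_iff.mpr (poch_ne_zero hd m)
  have e1 : K ^ n ≤ (K + K') ^ n := by gcongr; linarith
  have e2 : K' ^ m ≤ (K + K') ^ m := by gcongr; linarith
  rw [A, norm_div, norm_mul, norm_mul, norm_mul, norm_mul, Complex.norm_natCast,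
    Complex.norm_natCast, div_le_iff₀ (by positivity)]
  calc ‖poch a (n + m)‖ * ‖poch b (n + m)‖
      ≤ ((‖a‖ + 1) ^ (n + m) * (n + m).factorial) * ((‖b‖ + 1) ^ (n + m) * (n + m).factorial) :=
        mul_le_mul (norm_poch_le a _) (norm_poch_le b _) (norm_nonneg _) (by positivity)
    _ ≤ ((‖a‖ + 1) ^ (n + m) * (2 ^ (n + m) * (n.factorial * m.factorial))) *
        ((‖b‖ + 1) ^ (n + m) * (2 ^ (n + m) * (n.factorial * m.factorial))) := by gcongr
    _ = P ^ (n + m) * (n.factorial * m.factorial) * (n.factorial * m.factorial) := by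
        rw [hP, mul_pow, mul_pow, show (4 : ℝ) = 2 * 2 by norm_num, mul_pow]
        ring
    _ ≤ P ^ (n + m) * (n.factorial * m.factorial) *
        (((K + K') ^ n * ‖poch c n‖) * ((K + K') ^ m * ‖poch d m‖)) := by
        gcongr
        · exact (hcK n).trans (by gcongr)
        · exact (hdK m).trans (by gcongr)
    _ = _ := by
        rw [mul_pow P, mul_pow P, pow_add]
        ring

/-! ### Expansion in powers of `x` and `y` -/

lemma hasSum_e_mul (n m : ℕ) (x y : ℂ) :
    HasSum (fun w : ℕ × ℕ => (e n m w.1 * x ^ w.1) * (e m n w.2 * y ^ w.2))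
      ((x * (1 - y)) ^ n * (y * (1 - x)) ^ m) := by
  have hs : ∀ n m (x : ℂ), Summable fun p => ‖e n m p * x ^ p‖ := fun n m x => by
    simpa [norm_mul, norm_pow] using (hasSum_norm_e n m ‖x‖).summable
  have hxy : Summable fun w : ℕ × ℕ => (e n m w.1 * x ^ w.1) * (e m n w.2 * y ^ w.2) :=
    summable_mul_of_summable_norm (f := fun p => e n m p * x ^ p) (g := fun q => e m n q * y ^ q)
      (hs n m x) (hs m n y)
  have h := HasSum.mul (f := fun p => e n m p * x ^ p) (g := fun q => e m n q * y ^ q)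
    (hasSum_e n m x) (hasSum_e m n y) hxy
  have hv : (x * (1 - y)) ^ n * (y * (1 - x)) ^ m =
      x ^ n * (1 - x) ^ m * (y ^ m * (1 - y) ^ n) := by
    rw [mul_pow, mul_pow]
    ring
  rw [hv]
  exact h

lemma hasSum_norm_e_mul (n m : ℕ) (x y : ℂ) :
    HasSum (fun w : ℕ × ℕ => ‖(e n m w.1 * x ^ w.1) * (e m n w.2 * y ^ w.2)‖)
      ((‖x‖ * (1 + ‖y‖)) ^ n * (‖y‖ * (1 + ‖x‖)) ^ m) := by
  have h := (hasSum_norm_e n m ‖x‖).mul (hasSum_norm_e m n ‖y‖)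
    (Summable.mul_of_nonneg (hasSum_norm_e n m ‖x‖).summable (hasSum_norm_e m n ‖y‖).summable
      (fun p => by positivity) (fun p => by positivity))
  have hv : (‖x‖ * (1 + ‖y‖)) ^ n * (‖y‖ * (1 + ‖x‖)) ^ m =
      ‖x‖ ^ n * (1 + ‖x‖) ^ m * (‖y‖ ^ m * (1 + ‖y‖) ^ n) := by
    rw [mul_pow, mul_pow]
    ring
  rw [hv]
  simpa only [norm_mul, norm_pow] using h

end BaileyF4

/-! ### Rearrangement of the fourfold sum -/

open BaileyF4 in
theorem F4_Bailey_separation (a b c : ℂ) (hc : ∀ n : ℕ, c ≠ -(n : ℂ))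
    (hc2 : ∀ n : ℕ, a + b - c + 1 ≠ -(n : ℂ)) :
    ∃ ε > (0 : ℝ), ∀ x y : ℂ, ‖x‖ < ε → ‖y‖ < ε →
      F4 a b c (a + b - c + 1) (x * (1 - y)) (y * (1 - x)) =
        hpg21 a b c x * hpg21 a b (a + b - c + 1) y := by
  have hL := L_eq hc hc2
  obtain ⟨M, hM, hA⟩ := exists_norm_A_le a b hc hc2
  set d := a + b - c + 1
  -- With `ε ≤ 1` and `4 M ε ≤ 1`, both `M ‖x‖ (1 + ‖y‖)` and `M ‖y‖ (1 + ‖x‖)` are ≤ `1 / 2`.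
  refine ⟨min 1 (1 / (4 * M)), by positivity, fun x y hx hy => ?_⟩
  obtain ⟨hx1, hx2⟩ := lt_min_iff.mp hx
  obtain ⟨hy1, hy2⟩ := lt_min_iff.mp hy
  rw [lt_div_iff₀ (by positivity)] at hx2 hy2
  have nx := norm_nonneg x
  have ny := norm_nonneg y
  have geo : Summable fun n : ℕ => ((1 : ℝ) / 2) ^ n := summable_geometric_two
  have hX : M * (‖x‖ * (1 + ‖y‖)) ≤ 1 / 2 := by nlinarith [mul_nonneg hM.le nx]
  have hY : M * (‖y‖ * (1 + ‖x‖)) ≤ 1 / 2 := by nlinarith [mul_nonneg hM.le ny]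
  let f : ℕ × ℕ → ℕ × ℕ → ℂ := fun z w =>
    A a b c d z.1 z.2 * ((e z.1 z.2 w.1 * x ^ w.1) * (e z.2 z.1 w.2 * y ^ w.2))
  have hf : Summable (Function.uncurry f) := by
    apply Summable.of_norm
    have hz : ∀ z : ℕ × ℕ, HasSum (fun w => ‖f z w‖) (‖A a b c d z.1 z.2‖ *
        ((‖x‖ * (1 + ‖y‖)) ^ z.1 * (‖y‖ * (1 + ‖x‖)) ^ z.2)) := fun z => by
      simpa only [f, norm_mul (A a b c d z.1 z.2)] using
        (hasSum_norm_e_mul z.1 z.2 x y).mul_left ‖A a b c d z.1 z.2‖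
    rw [summable_prod_of_nonneg fun _ => norm_nonneg _]
    refine ⟨fun z => (hz z).summable, ?_⟩
    refine Summable.of_nonneg_of_le (fun z => tsum_nonneg fun _ => norm_nonneg _) (fun z => ?_)
      (geo.mul_of_nonneg geo (fun _ => by positivity) (fun _ => by positivity))
    calc ∑' w, ‖f z w‖ = _ := (hz z).tsum_eq
      _ ≤ (M ^ z.1 * M ^ z.2) *
          ((‖x‖ * (1 + ‖y‖)) ^ z.1 * (‖y‖ * (1 + ‖x‖)) ^ z.2) := by
          gcongr
          exact hA _ _
      _ = (M * (‖x‖ * (1 + ‖y‖))) ^ z.1 * (M * (‖y‖ * (1 + ‖x‖))) ^ z.2 := by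
          simp only [mul_pow]
          ring
      _ ≤ _ := by gcongr
  have hxA : Summable fun p => ‖A a b c d p 0 * x ^ p‖ := by
    refine Summable.of_nonneg_of_le (fun _ => norm_nonneg _) (fun p => ?_) geo
    rw [norm_mul, norm_pow]
    calc _ ≤ (M ^ p * M ^ 0) * ‖x‖ ^ p := by gcongr; exact hA p 0
      _ = (M * ‖x‖) ^ p := by rw [mul_pow]; ring
      _ ≤ _ := by gcongr; linarith
  have hyA : Summable fun q => ‖A a b c d 0 q * y ^ q‖ := by
    refine Summable.of_nonneg_of_le (fun _ => norm_nonneg _) (fun q => ?_) geo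
    rw [norm_mul, norm_pow]
    calc _ ≤ (M ^ 0 * M ^ q) * ‖y‖ ^ q := by gcongr; exact hA 0 q
      _ = (M * ‖y‖) ^ q := by rw [mul_pow]; ring
      _ ≤ _ := by gcongr; linarith
  calc F4 a b c d (x * (1 - y)) (y * (1 - x)) = ∑' z, ∑' w, f z w := by
        refine tsum_congr fun z => ?_
        rw [((hasSum_e_mul z.1 z.2 x y).mul_left (A a b c d z.1 z.2)).tsum_eq, A]
        ring
    _ = ∑' w, ∑' z, f z w := hf.tsum_comm.symm
    _ = ∑' w : ℕ × ℕ, (A a b c d w.1 0 * x ^ w.1) * (A a b c d 0 w.2 * y ^ w.2) := by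
        refine tsum_congr fun w => ?_
        calc ∑' z, f z w = L a b c d w.1 w.2 * (x ^ w.1 * y ^ w.2) := by
              rw [L, ← tsum_mul_right]
              refine tsum_congr fun z => ?_
              simp only [f]
              ring
          _ = _ := by
              rw [hL]
              ring
    _ = (∑' p, A a b c d p 0 * x ^ p) * ∑' q, A a b c d 0 q * y ^ q :=
        (tsum_mul_tsum_of_summable_norm hxA hyA).symm
    _ = hpg21 a b c x * hpg21 a b d y := by
        simp [hpg21, A, poch_zero]
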